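/- There is a constant c (independent of the game) such that every coordination game on a weighted simple cycle on n nodes in which at most two nodes have a non-zero bonus, and every coordination game with arbitrary bonuses on a simple cycle on n nodes in which at most two edges have weight different from 1 (all other edges have weight 1), admits, from every joint strategy, a finite c-improvement path of length at most c·n (hence ending in a strong equilibrium). -/

import Mathlib

open scoped Classical

namespace CG

/-- Payoff of node `i` in a coordination game on a weighted directed graph
with adjacency `adj` (an edge `j → i` is `adj j i`), edge weights `w`,
bonuses `β`, under the joint strategy `s`. -/
noncomputable def payoff {V M : Type} [Fintype V] (adj : V → V → Prop)
    (w : V → V → ℝ) (β : V → M → ℕ) (s : V → M) (i : V) : ℝ :=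
  (∑ j ∈ Finset.univ.filter (fun j => adj j i ∧ s j = s i), w j i) + (β i (s i) : ℝ)

/-- A joint strategy assigns to every node a colour from its colour set. -/
def Valid {V M : Type} (C : V → Finset M) (s : V → M) : Prop :=
  ∀ i, s i ∈ C i

/-- `s'` is a profitable deviation of the (non-empty) coalition
`K = {i | s i ≠ s' i}` from `s`. -/
def ProfDev {V M : Type} [Fintype V] (adj : V → V → Prop) (w : V → V → ℝ)
    (β : V → M → ℕ) (C : V → Finset M) (s s' : V → M) : Prop :=
  Valid C s' ∧ s ≠ s' ∧
    ∀ i, s i ≠ s' i → payoff adj w β s i < payoff adj w β s' i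

/-- A profitable deviation of a single player. -/
def UniDev {V M : Type} [Fintype V] (adj : V → V → Prop) (w : V → V → ℝ)
    (β : V → M → ℕ) (C : V → Finset M) (s s' : V → M) : Prop :=
  ProfDev adj w β C s s' ∧ ∃ i, ∀ j, j ≠ i → s j = s' j

/-- A Nash equilibrium: no single player has a profitable deviation. -/
def IsNash {V M : Type} [Fintype V] (adj : V → V → Prop) (w : V → V → ℝ)
    (β : V → M → ℕ) (C : V → Finset M) (s : V → M) : Prop :=
  Valid C s ∧ ∀ s', ¬ UniDev adj w β C s s'

/-- A strong equilibrium: no coalition has a profitable deviation. -/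
def IsStrong {V M : Type} [Fintype V] (adj : V → V → Prop) (w : V → V → ℝ)
    (β : V → M → ℕ) (C : V → Finset M) (s : V → M) : Prop :=
  Valid C s ∧ ∀ s', ¬ ProfDev adj w β C s s'

/-- There is a finite improvement path of length `L` starting at `s`
(each step a profitable single-player deviation) ending in a Nash equilibrium. -/
def ImpPath {V M : Type} [Fintype V] (adj : V → V → Prop) (w : V → V → ℝ)
    (β : V → M → ℕ) (C : V → Finset M) (s : V → M) (L : ℕ) : Prop :=
  ∃ σ : ℕ → V → M, σ 0 = s ∧
    (∀ t, t < L → UniDev adj w β C (σ t) (σ (t + 1))) ∧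
    IsNash adj w β C (σ L)

/-- There is a finite c-improvement path of length `L` starting at `s`
(each step a profitable coalition deviation) ending in a strong equilibrium. -/
def CImpPath {V M : Type} [Fintype V] (adj : V → V → Prop) (w : V → V → ℝ)
    (β : V → M → ℕ) (C : V → Finset M) (s : V → M) (L : ℕ) : Prop :=
  ∃ σ : ℕ → V → M, σ 0 = s ∧
    (∀ t, t < L → ProfDev adj w β C (σ t) (σ (t + 1))) ∧
    IsStrong adj w β C (σ L)

/-- Adjacency of the simple cycle `1 → 2 → ⋯ → n → 1` on `Fin n`. -/
def cycAdj (n : ℕ) : Fin n → Fin n → Prop :=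
  fun i j => (i.val + 1) % n = j.val

/-!
Let the nodes move in turn around the cycle, a node changing its colour only if this is profitable.
A node that changes either copies the colour of its predecessor or resets to a colour of maximal
bonus. If the weight of the edge into a node never outweighs a loss of bonus, then that node no
longer resets once it has changed: from then on its changes are copies. With only two other nodes,
the colours therefore travel unaltered from one of these to the other, and after finitely many
rounds some node declines to change. At that moment every node is playing a best response.

A coalition that profits from leaving a Nash equilibrium contains, with each of its nodes, the
predecessor of that node, and the two choose the same colour. So it consists of all nodes, and these
switch to one colour. Among the profitable colours, one of maximal bonus at a fixed node gives a
strong equilibrium.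
-/

section Paths

variable {V M : Type} [Fintype V] {adj : V → V → Prop} {w : V → V → ℝ} {β : V → M → ℕ}
  {C : V → Finset M} {s s' : V → M}

lemma IsStrong.cImpPath_zero (hs : IsStrong adj w β C s) : CImpPath adj w β C s 0 :=
  ⟨fun _ => s, rfl, fun _ ht => absurd ht (Nat.not_lt_zero _), hs⟩

lemma CImpPath.cons {L : ℕ} (hdev : ProfDev adj w β C s s') (h : CImpPath adj w β C s' L) :
    CImpPath adj w β C s (L + 1) := by
  obtain ⟨σ, rfl, hσ, hstrong⟩ := h
  refine ⟨fun | 0 => s | t + 1 => σ t, rfl, ?_, hstrong⟩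
  rintro (_ | t) ht
  · exact hdev
  · exact hσ t (Nat.lt_of_succ_lt_succ ht)

lemma exists_cImpPath_of_eq_or_profDev {σ : ℕ → V → M} {T m : ℕ}
    (hσ : ∀ t < T, σ (t + 1) = σ t ∨ ProfDev adj w β C (σ t) (σ (t + 1)))
    (hT : ∃ L ≤ m, CImpPath adj w β C (σ T) L) :
    ∃ L ≤ m + T, CImpPath adj w β C (σ 0) L := by
  induction T generalizing m with
  | zero => exact hT
  | succ T ih =>
    obtain ⟨L, hL, hpath⟩ := hT
    rw [Nat.add_comm T 1, ← Nat.add_assoc]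
    refine ih (fun t ht => hσ t (by omega)) ?_
    rcases hσ T T.lt_succ_self with hstay | hdev
    · exact ⟨L, by omega, hstay ▸ hpath⟩
    · exact ⟨L + 1, by omega, hpath.cons hdev⟩

end Paths

section LocalGame

variable {M : Type*}

/-- The payoff of a node with a single predecessor: `W` is the weight of the edge from the
predecessor, `x` the colour of the predecessor, `β` the bonus function of the node and `c` its own
colour. -/
noncomputable def localPayoff (W : ℝ) (β : M → ℕ) (x c : M) : ℝ :=
  (if x = c then W else 0) + β c

/-- The colour to which a node moves from the colour `c` when its predecessor has colour `x`.
Here `a` is meant to be a colour of maximal bonus in `C`. The node copies `x` if that beats `a`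
even when `a` is not supported by the predecessor; otherwise it stays at `c` if `c` is as good as
an unsupported `a`, and resets to `a` if not. -/
noncomputable def response (W : ℝ) (β : M → ℕ) (C : Finset M) (a x c : M) : M :=
  if x ∈ C ∧ (β a : ℝ) < W + β x then x
  else if (β a : ℝ) ≤ localPayoff W β x c then c
  else a

/-- The weight `W` of the incoming edge never outweighs a loss of bonus within `C`. -/
def BonusFirst (W : ℝ) (β : M → ℕ) (C : Finset M) : Prop :=
  ∀ x ∈ C, ∀ b ∈ C, (β b : ℝ) < W + β x → β b ≤ β x

variable {W : ℝ} {β : M → ℕ} {C : Finset M} {a x c d : M}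

lemma bonusFirst_of_bonus_eq_zero (h : ∀ c ∈ C, β c = 0) : BonusFirst W β C :=
  fun _ _ b hb _ => (h b hb).trans_le (Nat.zero_le _)

lemma bonusFirst_of_weight_le_one (hW : W ≤ 1) : BonusFirst W β C := by
  intro x _ b _ hlt
  have : (β b : ℝ) < (β x + 1 : ℕ) := by push_cast; linarith
  exact Nat.lt_succ_iff.mp (by exact_mod_cast this)

lemma localPayoff_self : localPayoff W β c c = W + β c := by
  simp [localPayoff]

lemma localPayoff_of_ne (h : x ≠ c) : localPayoff W β x c = β c := by
  simp [localPayoff, h]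

lemma bonus_le_localPayoff (hW : 0 ≤ W) : (β c : ℝ) ≤ localPayoff W β x c := by
  unfold localPayoff
  split_ifs <;> linarith

lemma response_mem (ha : a ∈ C) (hc : c ∈ C) : response W β C a x c ∈ C := by
  unfold response
  split_ifs with hcopy
  exacts [hcopy.1, hc, ha]

lemma response_copies_or_resets (h : response W β C a x c ≠ c) :
    (response W β C a x c = x ∧ x ∈ C ∧ (β a : ℝ) < W + β x) ∨
      (response W β C a x c = a ∧ localPayoff W β x c < β a) := by
  unfold response at h ⊢
  split_ifs at h ⊢ with hcopy hstay
  · exact .inl ⟨rfl, hcopy⟩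
  · exact absurd rfl h
  · exact .inr ⟨rfl, not_le.mp hstay⟩

lemma localPayoff_lt_response (hW : 0 ≤ W) (hmax : ∀ d ∈ C, β d ≤ β a) (hc : c ∈ C)
    (h : response W β C a x c ≠ c) :
    localPayoff W β x c < localPayoff W β x (response W β C a x c) := by
  rcases response_copies_or_resets h with ⟨hcopy, -, hlt⟩ | ⟨hreset, hlt⟩
  · rw [hcopy] at h ⊢
    have hca : (β c : ℝ) ≤ β a := mod_cast hmax c hc
    rw [localPayoff_self, localPayoff_of_ne h]
    exact hca.trans_lt hlt
  · rw [hreset]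
    exact hlt.trans_le (bonus_le_localPayoff hW)

lemma localPayoff_le_response (hW : 0 ≤ W) (hmax : ∀ d ∈ C, β d ≤ β a) (hd : d ∈ C) :
    localPayoff W β x d ≤ localPayoff W β x (response W β C a x c) := by
  have hda : (β d : ℝ) ≤ β a := mod_cast hmax d hd
  by_cases hcopy : x ∈ C ∧ (β a : ℝ) < W + β x
  · rw [response, if_pos hcopy, localPayoff_self]
    rcases eq_or_ne x d with rfl | hxd
    · exact localPayoff_self.le
    · rw [localPayoff_of_ne hxd]
      exact hda.trans hcopy.2.le
  · have hle : localPayoff W β x d ≤ β a := by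
      rcases eq_or_ne x d with rfl | hxd
      · rw [localPayoff_self]
        exact not_lt.mp fun hlt => hcopy ⟨hd, hlt⟩
      · rwa [localPayoff_of_ne hxd]
    rw [response, if_neg hcopy]
    split_ifs with hstay
    exacts [hle.trans hstay, hle.trans (bonus_le_localPayoff hW)]

lemma BonusFirst.bonus_le_response (hB : BonusFirst W β C) (ha : a ∈ C)
    (h : response W β C a x c ≠ c) : β a ≤ β (response W β C a x c) := by
  rcases response_copies_or_resets h with ⟨hcopy, hx, hlt⟩ | ⟨hreset, -⟩
  · rw [hcopy]
    exact hB x hx a ha hlt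
  · rw [hreset]

lemma response_eq_of_bonus_le (hW : 0 ≤ W) (hac : β a ≤ β c) (h : response W β C a x c ≠ c) :
    response W β C a x c = x := by
  rcases response_copies_or_resets h with ⟨hcopy, -⟩ | ⟨-, hlt⟩
  · exact hcopy
  · have : (β a : ℝ) ≤ β c := mod_cast hac
    exact absurd (this.trans (bonus_le_localPayoff hW)) (not_le.mpr hlt)

end LocalGame

section Cycle

open scoped Fin.CommRing Fin.NatCast

variable {n : ℕ} [NeZero n] {M : Type} {w : Fin n → Fin n → ℝ} {β : Fin n → M → ℕ}
  {C : Fin n → Finset M} {s s' : Fin n → M} {i : Fin n} {c d : M}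

lemma natCast_ne_of_lt_of_lt_add {t u : ℕ} (htu : t < u) (hut : u < t + n) :
    (t : Fin n) ≠ u := by
  intro h
  have hmod : t ≡ u [MOD n] := by simpa [Nat.ModEq, Fin.ext_iff] using h
  have := Nat.le_of_dvd (by omega) ((Nat.modEq_iff_dvd' htu.le).mp hmod)
  omega

lemma exists_natCast_eq_of_window (t : ℕ) (i : Fin n) : ∃ r, t ≤ r ∧ r < t + n ∧ (r : Fin n) = i :=
  ⟨t + (i - (t : Fin n)).val, by omega, by omega, by simp⟩

lemma forall_of_forall_sub_one {P : Fin n → Prop} (hP : ∀ i, P i → P (i - 1)) {i₀ : Fin n}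
    (h₀ : P i₀) (i : Fin n) : P i := by
  have hback : ∀ k : ℕ, P (i₀ - (k : Fin n)) := by
    intro k
    induction k with
    | zero => simpa using h₀
    | succ k ih => simpa [sub_sub] using hP _ ih
  simpa using hback (i₀ - i).val

lemma sub_one_ne_self (hn : 2 ≤ n) (i : Fin n) : i - 1 ≠ i := by
  simp [show n ≠ 1 by omega]

lemma cycAdj_iff {i j : Fin n} : cycAdj n i j ↔ j = i + 1 := by
  simp [cycAdj, Fin.ext_iff, Fin.val_add, eq_comm]

lemma payoff_cycAdj :
    payoff (cycAdj n) w β s i = localPayoff (w (i - 1) i) (β i) (s (i - 1)) (s i) := by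
  have hpred (j : Fin n) : cycAdj n j i ↔ i - 1 = j := by
    rw [cycAdj_iff, sub_eq_iff_eq_add]
  simp [payoff, localPayoff, hpred, Finset.sum_filter, ite_and]

lemma uniDev_update (hn : 2 ≤ n) (hs : Valid C s) (hd : d ∈ C i)
    (hlt : payoff (cycAdj n) w β s i < localPayoff (w (i - 1) i) (β i) (s (i - 1)) d) :
    UniDev (cycAdj n) w β C s (Function.update s i d) := by
  have hpay : payoff (cycAdj n) w β s i < payoff (cycAdj n) w β (Function.update s i d) i := by
    rwa [payoff_cycAdj (s := Function.update s i d), Function.update_self,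
      Function.update_of_ne (sub_one_ne_self hn i)]
  refine ⟨⟨?_, ?_, ?_⟩, i, fun j hj => (Function.update_of_ne hj d s).symm⟩
  · intro j
    rcases eq_or_ne j i with rfl | hj
    · rwa [Function.update_self]
    · rw [Function.update_of_ne hj]
      exact hs j
  · intro h
    rw [← h] at hpay
    exact hpay.false
  · intro j hj
    obtain rfl : j = i := by
      by_contra hne
      exact hj (Function.update_of_ne hne d s).symm
    exact hpay

lemma isNash_cycAdj_iff (hn : 2 ≤ n) :
    IsNash (cycAdj n) w β C s ↔ Valid C s ∧ ∀ i, ∀ d ∈ C i,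
      localPayoff (w (i - 1) i) (β i) (s (i - 1)) d ≤ payoff (cycAdj n) w β s i := by
  constructor
  · intro ⟨hs, hno⟩
    exact ⟨hs, fun i d hd => not_lt.mp fun hlt => hno _ (uniDev_update hn hs hd hlt)⟩
  · rintro ⟨hs, hbest⟩
    refine ⟨hs, fun s' ⟨⟨hs', hne, hprofit⟩, i, hi⟩ => ?_⟩
    have hdev : s i ≠ s' i := fun h => hne <| funext fun j => by
      rcases eq_or_ne j i with rfl | hj
      exacts [h, hi j hj]
    have hlt := hprofit i hdev
    rw [payoff_cycAdj (s := s'), ← hi _ (sub_one_ne_self hn i)] at hlt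
    exact (hbest i _ (hs' i)).not_gt hlt

section Strong

lemma IsNash.predecessor_deviates (hn : 2 ≤ n) (hw : ∀ i, 0 ≤ w (i - 1) i)
    (hs : IsNash (cycAdj n) w β C s) (h : ProfDev (cycAdj n) w β C s s') (hi : s i ≠ s' i) :
    s (i - 1) ≠ s' (i - 1) ∧ s' (i - 1) = s' i := by
  have hlt := h.2.2 i hi
  have hle := ((isNash_cycAdj_iff hn).mp hs).2 i _ (h.1 i)
  rw [payoff_cycAdj (s := s')] at hlt
  refine ⟨fun heq => ?_, by_contra fun hne => ?_⟩
  · rw [← heq] at hlt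
    exact hle.not_gt hlt
  · rw [localPayoff_of_ne hne] at hlt
    exact (hle.trans_lt hlt).not_ge (bonus_le_localPayoff (hw i))

lemma IsNash.eq_const_of_profDev (hn : 2 ≤ n) (hw : ∀ i, 0 ≤ w (i - 1) i)
    (hs : IsNash (cycAdj n) w β C s) (h : ProfDev (cycAdj n) w β C s s') :
    (∀ i, s i ≠ s' i) ∧ ∃ c, s' = fun _ => c := by
  obtain ⟨i₀, hi₀⟩ := Function.ne_iff.mp h.2.1
  have hall : ∀ i, s i ≠ s' i ∧ s' i = s' i₀ :=
    forall_of_forall_sub_one (P := fun i => s i ≠ s' i ∧ s' i = s' i₀) (fun i hi =>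
      (hs.predecessor_deviates hn hw h hi.1).imp_right fun hpred => hpred.trans hi.2) ⟨hi₀, rfl⟩
  exact ⟨fun i => (hall i).1, s' i₀, funext fun i => (hall i).2⟩

lemma IsNash.payoff_lt_of_profDev (hn : 2 ≤ n) (hw : ∀ i, 0 ≤ w (i - 1) i)
    (hs : IsNash (cycAdj n) w β C s) (h : ProfDev (cycAdj n) w β C s s') (i : Fin n) :
    payoff (cycAdj n) w β s i < payoff (cycAdj n) w β s' i :=
  h.2.2 i ((hs.eq_const_of_profDev hn hw h).1 i)

lemma IsNash.of_profDev_const (hn : 2 ≤ n) (hw : ∀ i, 0 ≤ w (i - 1) i)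
    (hs : IsNash (cycAdj n) w β C s) (h : ProfDev (cycAdj n) w β C s fun _ => c) :
    IsNash (cycAdj n) w β C fun _ => c := by
  refine (isNash_cycAdj_iff hn).mpr ⟨h.1, fun i d hd => ?_⟩
  rcases eq_or_ne c d with rfl | hcd
  · exact (payoff_cycAdj (s := fun _ => c)).ge
  calc localPayoff (w (i - 1) i) (β i) c d = β i d := localPayoff_of_ne hcd
    _ ≤ localPayoff (w (i - 1) i) (β i) (s (i - 1)) d := bonus_le_localPayoff (hw i)
    _ ≤ payoff (cycAdj n) w β s i := ((isNash_cycAdj_iff hn).mp hs).2 i d hd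
    _ ≤ payoff (cycAdj n) w β (fun _ => c) i := (hs.payoff_lt_of_profDev hn hw h i).le

lemma IsNash.profDev_trans (hn : 2 ≤ n) (hw : ∀ i, 0 ≤ w (i - 1) i)
    (hs : IsNash (cycAdj n) w β C s) (h : ProfDev (cycAdj n) w β C s s')
    (hs' : IsNash (cycAdj n) w β C s') {s'' : Fin n → M}
    (h' : ProfDev (cycAdj n) w β C s' s'') : ProfDev (cycAdj n) w β C s s'' := by
  have hlt i := (hs.payoff_lt_of_profDev hn hw h i).trans (hs'.payoff_lt_of_profDev hn hw h' i)
  refine ⟨h'.1, fun heq => ?_, fun i _ => hlt i⟩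
  exact (heq ▸ hlt 0).false

lemma IsNash.exists_cImpPath_le_one (hn : 2 ≤ n) (hw : ∀ i, 0 ≤ w (i - 1) i)
    (hs : IsNash (cycAdj n) w β C s) : ∃ L ≤ 1, CImpPath (cycAdj n) w β C s L := by
  by_cases hstrong : IsStrong (cycAdj n) w β C s
  · exact ⟨0, zero_le_one, hstrong.cImpPath_zero⟩
  let profitable := {c ∈ C 0 | ProfDev (cycAdj n) w β C s fun _ => c}
  have hne : profitable.Nonempty := by
    obtain ⟨s', hdev⟩ : ∃ s', ProfDev (cycAdj n) w β C s s' := by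
      by_contra hno
      exact hstrong ⟨hs.1, not_exists.mp hno⟩
    obtain ⟨-, c, rfl⟩ := hs.eq_const_of_profDev hn hw hdev
    exact ⟨c, Finset.mem_filter.mpr ⟨hdev.1 0, hdev⟩⟩
  obtain ⟨c, hc, hmax⟩ := profitable.exists_max_image (β 0) hne
  have hdev := (Finset.mem_filter.mp hc).2
  have hnash := hs.of_profDev_const hn hw hdev
  refine ⟨1, le_rfl, CImpPath.cons hdev (IsStrong.cImpPath_zero ⟨hdev.1, fun s'' hdev' => ?_⟩)⟩
  obtain ⟨-, c', rfl⟩ := hnash.eq_const_of_profDev hn hw hdev'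
  have hle : β 0 c' ≤ β 0 c := hmax c' <| Finset.mem_filter.mpr
    ⟨hdev'.1 0, hs.profDev_trans hn hw hdev hnash hdev'⟩
  have hlt := hnash.payoff_lt_of_profDev hn hw hdev' 0
  simp only [payoff_cycAdj, localPayoff_self, add_lt_add_iff_left, Nat.cast_lt] at hlt
  exact hle.not_gt hlt

end Strong

section RoundRobin

/-- The joint strategies that arise when the nodes `0, 1, …, n - 1, 0, 1, …` move in turn, starting
from `s`: at time `t` the node `t mod n` replaces its colour `c` by `R t x c`, where `x` is the
colour of its predecessor. -/
def roundRobin (R : Fin n → M → M → M) (s : Fin n → M) : ℕ → Fin n → M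
  | 0 => s
  | t + 1 => Function.update (roundRobin R s t) t
      (R t (roundRobin R s t (t - 1)) (roundRobin R s t t))

/-- The colour that the node `t mod n` has just before it moves at time `t`. -/
def turnColour (R : Fin n → M → M → M) (s : Fin n → M) (t : ℕ) : M :=
  roundRobin R s t t

variable {R : Fin n → M → M → M}

lemma roundRobin_natCast {t r : ℕ} (htr : t ≤ r) (hrt : r < t + n) :
    roundRobin R s t r = turnColour R s r := by
  induction htr using Nat.decreasingInduction with
  | self => rfl
  | of_succ t htr ih =>
    rw [← ih (by omega), roundRobin, Function.update_of_ne]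
    exact (natCast_ne_of_lt_of_lt_add htr hrt).symm

lemma turnColour_succ {t u : ℕ} (h : t + n = u + 1) :
    turnColour R s (u + 1) = R (u + 1 : ℕ) (turnColour R s u) (turnColour R s t) := by
  have hn := NeZero.pos n
  have hnode : ((u + 1 : ℕ) : Fin n) = t := by simp [← h]
  have hpred : (t : Fin n) - 1 = u := by simp [← hnode]
  rw [← roundRobin_natCast (t := t + 1) (by omega) (by omega), hnode, roundRobin,
    Function.update_self, hpred, roundRobin_natCast (by omega) (by omega), turnColour,
    turnColour]

lemma roundRobin_valid (hR : ∀ i x, ∀ c ∈ C i, R i x c ∈ C i) (hs : Valid C s) (t : ℕ) :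
    Valid C (roundRobin R s t) := by
  induction t with
  | zero => exact hs
  | succ t ih =>
    intro i
    rw [roundRobin]
    rcases eq_or_ne i t with rfl | hi
    · rw [Function.update_self]
      exact hR _ _ _ (ih _)
    · rw [Function.update_of_ne hi]
      exact ih i

/-- After a full round every node has replied to a colour that is still in place, except for the
node about to move; `hfix` covers that one. -/
lemma exists_response_of_turnColour_add_eq {t : ℕ} (hnt : n ≤ t)
    (hfix : turnColour R s (t + n) = turnColour R s t) (i : Fin n) :
    ∃ c, roundRobin R s t i = R i (roundRobin R s t (i - 1)) c := by
  obtain ⟨r, htr, hrt, hr⟩ := exists_natCast_eq_of_window t (i - 1)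
  obtain rfl : i = (r + 1 : ℕ) := by simp [hr]
  have hown : roundRobin R s t (r + 1 : ℕ) = turnColour R s (r + 1) := by
    rcases (Nat.succ_le_of_lt hrt).lt_or_eq with hlt | heq
    · exact roundRobin_natCast (by omega) hlt
    · rw [← Nat.succ_eq_add_one, heq, hfix]
      simp [turnColour]
  refine ⟨turnColour R s (r + 1 - n), ?_⟩
  rw [hown, ← hr, roundRobin_natCast htr hrt, turnColour_succ (t := r + 1 - n) (by omega)]

end RoundRobin

section Convergence

lemma exists_repeat_of_alternating {E F : ℕ → M} {a b : M} (hF : ∀ k ≤ 2, F k = E k ∨ F k = b)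
    (hE : ∀ k < 2, E (k + 1) = F k ∨ E (k + 1) = a) :
    ∃ k < 2, E (k + 1) = E k ∨ F (k + 1) = F k := by
  by_contra! hne
  obtain ⟨hE₁, hF₁⟩ := hne 0 (by norm_num)
  obtain ⟨hE₂, hF₂⟩ := hne 1 (by norm_num)
  rcases hE 0 (by norm_num) with hE₁F | hE₁a
  · rcases hF 0 (by norm_num) with hF₀ | hF₀
    · exact hE₁ (hE₁F.trans hF₀)
    · rcases hF 1 (by norm_num) with hF₁E | hF₁b
      · exact hF₁ (hF₁E.trans hE₁F)
      · exact hF₁ (hF₁b.trans hF₀.symm)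
  · have hE₂F : E 2 = F 1 := (hE 1 (by norm_num)).resolve_right fun h => hE₂ (h.trans hE₁a.symm)
    have hF₁b : F 1 = b := (hF 1 (by norm_num)).resolve_left fun h => hE₂ (hE₂F.trans h)
    rcases hF 2 le_rfl with hF₂E | hF₂b
    · exact hF₂ (hF₂E.trans hE₂F)
    · exact hF₂ (hF₂b.trans hF₁b.symm)

lemma eq_or_eq_of_succ_eq {v : ℕ → M} {a : M} {r r' : ℕ} (hr : r < r')
    (hcopy : ∀ t, r ≤ t → t + 1 < r' → v (t + 1) = v t)
    (hlast : ∀ t, r ≤ t → t + 1 = r' → v (t + 1) = v t ∨ v (t + 1) = a) :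
    v r' = v r ∨ v r' = a := by
  obtain ⟨u, rfl⟩ : ∃ u, r' = u + 1 := Nat.exists_eq_add_one_of_ne_zero (by omega)
  have hconst : v u = v r := by
    have hru : r ≤ u := Nat.le_of_lt_succ hr
    clear hlast hr
    induction u, hru using Nat.le_induction with
    | base => rfl
    | succ u hru ih =>
      exact (hcopy u hru (by omega)).trans (ih fun t hrt htu => hcopy t hrt (by omega))
  exact hconst ▸ hlast u (by omega) rfl

lemma exists_add_eq_of_copies_or_resets {v : ℕ → M} {a : Fin n → M} {p q : ℕ} (hpq : p < q)
    (hqp : q < p + n)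
    (hcopy : ∀ t, p ≤ t → t < q + 2 * n → ((t + 1 : ℕ) : Fin n) ≠ p → ((t + 1 : ℕ) : Fin n) ≠ q →
      v (t + 1) = v t)
    (hreset : ∀ t, p ≤ t → t < q + 2 * n → v (t + 1) = v t ∨ v (t + 1) = a (t + 1 : ℕ)) :
    ∃ t, p ≤ t ∧ t ≤ q + n ∧ v (t + n) = v t := by
  have hp k : ((p + k * n : ℕ) : Fin n) = p := by simp
  have hq k : ((q + k * n : ℕ) : Fin n) = q := by simp
  have hF : ∀ k ≤ 2, v (q + k * n) = v (p + k * n) ∨ v (q + k * n) = a q := by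
    intro k hk
    have := Nat.mul_le_mul_right n hk
    refine eq_or_eq_of_succ_eq (by omega) (fun t hpt htq => ?_) (fun t _ htq => ?_)
    · refine hcopy t (by omega) (by omega) ?_ ?_
      · rw [← hp k]
        exact (natCast_ne_of_lt_of_lt_add (by omega) (by omega)).symm
      · rw [← hq k]
        exact natCast_ne_of_lt_of_lt_add (by omega) (by omega)
    · rw [← hq k, ← htq]
      exact hreset t (by omega) (by omega)
  have hE : ∀ k < 2, v (p + (k + 1) * n) = v (q + k * n) ∨ v (p + (k + 1) * n) = a p := by
    intro k hk
    have := Nat.mul_le_mul_right n (Nat.le_of_lt_succ hk)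
    have := Nat.add_one_mul k n
    refine eq_or_eq_of_succ_eq (by omega) (fun t hqt htp => ?_) (fun t _ htp => ?_)
    · refine hcopy t (by omega) (by omega) ?_ ?_
      · rw [← hp (k + 1)]
        exact natCast_ne_of_lt_of_lt_add (by omega) (by omega)
      · rw [← hq k]
        exact (natCast_ne_of_lt_of_lt_add (by omega) (by omega)).symm
    · rw [← hp (k + 1), ← htp]
      exact hreset t (by omega) (by omega)
  obtain ⟨k, hk, hrep | hrep⟩ := exists_repeat_of_alternating hF hE
  all_goals
    have := Nat.mul_le_mul_right n (Nat.le_of_lt_succ hk)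
    simp only [Nat.succ_mul, ← add_assoc] at hrep
  exacts [⟨p + k * n, by omega, by omega, hrep⟩, ⟨q + k * n, by omega, by omega, hrep⟩]

lemma exists_add_eq_of_response {W : Fin n → ℝ} {a : Fin n → M} {e f : Fin n} {v : ℕ → M}
    (hW : ∀ i, 0 ≤ W i) (ha : ∀ i, a i ∈ C i) (hef : e < f)
    (hB : ∀ i, i ≠ e → i ≠ f → BonusFirst (W i) (β i) (C i))
    (hv : ∀ t u, t + n = u + 1 → v (u + 1) = response (W (u + 1 : ℕ)) (β (u + 1 : ℕ))
      (C (u + 1 : ℕ)) (a (u + 1 : ℕ)) (v u) (v t)) :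
    ∃ t, n ≤ t ∧ t < 5 * n ∧ v (t + n) = v t := by
  by_contra! hne
  have hchange : ∀ t u, t + n = u + 1 → n ≤ t → t < 5 * n → v (u + 1) ≠ v t :=
    fun t u htu hnt htn => htu ▸ hne t hnt htn
  have hbonus : ∀ u, 2 * n ≤ u + 1 → u + 1 < 6 * n → ((u + 1 : ℕ) : Fin n) ≠ e →
      ((u + 1 : ℕ) : Fin n) ≠ f →
      β (u + 1 : ℕ) (a (u + 1 : ℕ)) ≤ β (u + 1 : ℕ) (v (u + 1)) := by
    intro u hnu hun hue huf
    have htu : u + 1 - n + n = u + 1 := by omega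
    have := hchange _ u htu (by omega) (by omega)
    rw [hv _ u htu] at this ⊢
    exact (hB _ hue huf).bonus_le_response (ha _) this
  have hreset : ∀ u, 2 * n ≤ u + 1 → u + 1 < 6 * n →
      v (u + 1) = v u ∨ v (u + 1) = a (u + 1 : ℕ) := by
    intro u hnu hun
    have htu : u + 1 - n + n = u + 1 := by omega
    have := hchange _ u htu (by omega) (by omega)
    rw [hv _ u htu] at this ⊢
    exact (response_copies_or_resets this).imp And.left And.left
  have hcopy : ∀ u, 3 * n ≤ u + 1 → u + 1 < 6 * n → ((u + 1 : ℕ) : Fin n) ≠ e →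
      ((u + 1 : ℕ) : Fin n) ≠ f → v (u + 1) = v u := by
    intro u hnu hun hue huf
    obtain ⟨t, htu⟩ : ∃ t, t + 1 + n = u + 1 := ⟨u - n, by omega⟩
    have hnode : ((t + 1 : ℕ) : Fin n) = (u + 1 : ℕ) := by simp [← htu]
    have hown := hbonus t (by omega) (by omega) (hnode ▸ hue) (hnode ▸ huf)
    have := hchange _ u htu (by omega) (by omega)
    rw [hnode] at hown
    rw [hv _ u htu] at this ⊢
    exact response_eq_of_bonus_le (hW _) hown this
  have : e.val < f.val := hef
  have he : ((3 * n + e.val : ℕ) : Fin n) = e := by simp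
  have hf : ((3 * n + f.val : ℕ) : Fin n) = f := by simp
  obtain ⟨t, hpt, htq, hrep⟩ := exists_add_eq_of_copies_or_resets
    (v := v) (a := a) (p := 3 * n + e) (q := 3 * n + f) (by omega) (by omega)
    (fun t hpt htq hte htf => hcopy t (by omega) (by omega) (he ▸ hte) (hf ▸ htf))
    (fun t hpt htq => hreset t (by omega) (by omega))
  exact hne t (by omega) (by omega) hrep

lemma exists_lt_pair_subset {α : Type*} [LinearOrder α] [Nontrivial α] (e f : α) :
    ∃ x y : α, x < y ∧ ({e, f} : Set α) ⊆ {x, y} := by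
  obtain ⟨g, hge, hsub⟩ : ∃ g ≠ e, ({e, f} : Set α) ⊆ {e, g} := by
    rcases eq_or_ne f e with rfl | hfe
    · obtain ⟨g, hg⟩ := exists_ne f
      exact ⟨g, hg, by simp⟩
    · exact ⟨f, hfe, le_rfl⟩
  rcases hge.lt_or_gt with hlt | hlt
  · exact ⟨g, e, hlt, hsub.trans_eq (Set.pair_comm e g)⟩
  · exact ⟨e, g, hlt, hsub⟩

/-- The rule by which the nodes of the cycle move: each node responds to its predecessor, with
`a i` as the colour of maximal bonus at the node `i`. -/
noncomputable def responseRule (w : Fin n → Fin n → ℝ) (β : Fin n → M → ℕ) (C : Fin n → Finset M)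
    (a : Fin n → M) (i : Fin n) : M → M → M :=
  response (w (i - 1) i) (β i) (C i) (a i)

lemma roundRobin_responseRule_valid {a : Fin n → M} (ha : ∀ i, a i ∈ C i) (hs : Valid C s) (t : ℕ) :
    Valid C (roundRobin (responseRule w β C a) s t) :=
  roundRobin_valid (fun i _ _ hc => response_mem (ha i) hc) hs t

lemma roundRobin_succ_eq_or_profDev (hn : 2 ≤ n) (hw : ∀ i, 0 ≤ w (i - 1) i) {a : Fin n → M}
    (ha : ∀ i, a i ∈ C i) (hmax : ∀ i, ∀ d ∈ C i, β i d ≤ β i (a i)) (hs : Valid C s) (t : ℕ) :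
    let σ := roundRobin (responseRule w β C a) s
    σ (t + 1) = σ t ∨ ProfDev (cycAdj n) w β C (σ t) (σ (t + 1)) := by
  intro σ
  have hvalid : Valid C (σ t) := roundRobin_responseRule_valid ha hs t
  simp only [σ, roundRobin, responseRule]
  refine or_iff_not_imp_left.mpr fun hmove => (uniDev_update hn hvalid ?_ ?_).1
  · exact response_mem (ha _) (hvalid _)
  · rw [payoff_cycAdj]
    refine localPayoff_lt_response (hw _) (hmax _) (hvalid _) fun hstay => hmove ?_
    rw [hstay, Function.update_eq_self]

lemma exists_isNash_roundRobin (hn : 2 ≤ n) (hw : ∀ i, 0 ≤ w (i - 1) i) {a : Fin n → M}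
    (ha : ∀ i, a i ∈ C i) (hmax : ∀ i, ∀ d ∈ C i, β i d ≤ β i (a i)) {e f : Fin n} (hef : e < f)
    (hB : ∀ i, i ≠ e → i ≠ f → BonusFirst (w (i - 1) i) (β i) (C i)) (hs : Valid C s) :
    ∃ t < 5 * n, IsNash (cycAdj n) w β C
      (roundRobin (responseRule w β C a) s t) := by
  obtain ⟨t, hnt, htn, hfix⟩ := exists_add_eq_of_response hw ha hef hB
    (v := turnColour (responseRule w β C a) s)
    fun _ _ => turnColour_succ
  have hvalid := roundRobin_responseRule_valid (w := w) (β := β) ha hs t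
  refine ⟨t, htn, (isNash_cycAdj_iff hn).mpr ⟨hvalid, fun i d hd => ?_⟩⟩
  obtain ⟨c, hc⟩ := exists_response_of_turnColour_add_eq hnt hfix i
  rw [payoff_cycAdj, hc]
  exact localPayoff_le_response (hw i) (hmax i) hd

end Convergence

theorem cycle_cimprovement_path_corollary_general (hn : 2 ≤ n)
    (hw : ∀ i j, cycAdj n i j → 0 ≤ w i j) (e f : Fin n)
    (hB : ∀ i j, cycAdj n i j → j ≠ e → j ≠ f → BonusFirst (w i j) (β j) (C j))
    (hs : Valid C s) : ∃ L ≤ 5 * n, CImpPath (cycAdj n) w β C s L := by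
  have hpred (i : Fin n) : cycAdj n (i - 1) i := cycAdj_iff.mpr (sub_add_cancel i 1).symm
  have hw' (i : Fin n) : 0 ≤ w (i - 1) i := hw _ _ (hpred i)
  choose a ha hmax using fun i => (C i).exists_max_image (β i) ⟨s i, hs i⟩
  have : Nontrivial (Fin n) := Fin.nontrivial_iff_two_le.mpr hn
  obtain ⟨e', f', hlt, hsub⟩ := exists_lt_pair_subset e f
  have hB' (i : Fin n) (hie : i ≠ e') (hif : i ≠ f') : BonusFirst (w (i - 1) i) (β i) (C i) := by
    have hi : i ∉ ({e, f} : Set (Fin n)) := fun h => (hsub h).elim hie hif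
    exact hB _ _ (hpred i) (fun h => hi (.inl h)) (fun h => hi (.inr h))
  obtain ⟨T, hT, hnash⟩ := exists_isNash_roundRobin hn hw' ha hmax hlt hB' hs
  obtain ⟨L, hL, hpath⟩ := exists_cImpPath_of_eq_or_profDev
    (fun t _ => roundRobin_succ_eq_or_profDev hn hw' ha hmax hs t)
    (hnash.exists_cImpPath_le_one hn hw')
  exact ⟨L, by omega, hpath⟩

end Cycle

/-- There is a constant `c` such that every coordination game on a weighted
simple cycle on `n` nodes with at most two nodes having a non-zero bonus, and
every coordination game with arbitrary bonuses on a simple cycle on `n` nodes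
with at most two edges of weight different from `1`, admits, from every joint
strategy, a finite c-improvement path of length at most `c * n` ending in a
strong equilibrium. -/
theorem cycle_cimprovement_path_corollary :
    ∃ c : ℕ,
      (∀ (n : ℕ), 2 ≤ n →
        ∀ (M : Type) [Fintype M],
        ∀ (w : Fin n → Fin n → ℝ), (∀ i j, cycAdj n i j → 0 ≤ w i j) →
        ∀ (β : Fin n → M → ℕ),
          (∃ a b : Fin n, ∀ i, (∃ col, β i col ≠ 0) → i = a ∨ i = b) →
        ∀ (C : Fin n → Finset M), (∀ i, (C i).Nonempty) →
        ∀ s : Fin n → M, Valid C s →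
          ∃ L, L ≤ c * n ∧ CImpPath (cycAdj n) w β C s L) ∧
      (∀ (n : ℕ), 2 ≤ n →
        ∀ (M : Type) [Fintype M],
        ∀ (w : Fin n → Fin n → ℝ), (∀ i j, cycAdj n i j → 0 ≤ w i j) →
          (∃ a b : Fin n, ∀ i j, cycAdj n i j → w i j ≠ 1 → i = a ∨ i = b) →
        ∀ (β : Fin n → M → ℕ),
        ∀ (C : Fin n → Finset M), (∀ i, (C i).Nonempty) →
        ∀ s : Fin n → M, Valid C s →
          ∃ L, L ≤ c * n ∧ CImpPath (cycAdj n) w β C s L) := by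
  refine ⟨5, ?_, ?_⟩
  · rintro n hn M _ w hw β ⟨a, b, hβ⟩ C - s hs
    have : NeZero n := ⟨by omega⟩
    refine cycle_cimprovement_path_corollary_general hn hw a b (fun i j _ hja hjb => ?_) hs
    refine bonusFirst_of_bonus_eq_zero fun c _ => ?_
    exact by_contra fun hc => (hβ j ⟨c, hc⟩).elim hja hjb
  · rintro n hn M _ w hw ⟨a, b, hone⟩ β C - s hs
    have : NeZero n := ⟨by omega⟩
    refine cycle_cimprovement_path_corollary_general hn hw (a + 1) (b + 1)
      (fun i j hij hja hjb => ?_) hs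
    obtain rfl := cycAdj_iff.mp hij
    refine bonusFirst_of_weight_le_one (le_of_eq ?_)
    by_contra hne
    exact (hone i _ hij hne).elim (fun h => hja (h ▸ rfl)) fun h => hjb (h ▸ rfl)

end CG
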